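/- Let d ≥ 1, let α = (α_1,…,α_d) be a multi-index with α_j > −1/2 for each j, and let 0 < β_1 < β_2. If a bounded measurable function f on (0,∞)^d satisfies the Laguerre Lipschitz condition of order β_2 with some constant A (i.e., sup_x |∂^{n_2}_t P_t^α f(x)| ≤ A t^{β_2−n_2} for all t > 0, where n_2 is the smallest integer greater than β_2), then there exists a constant A' ≥ 0 such that f satisfies the Laguerre Lipschitz condition of order β_1 with constant A' (i.e., sup_x |∂^{n_1}_t P_t^α f(x)| ≤ A' t^{β_1−n_1} for all t > 0, where n_1 is the smallest integer greater than β_1). In other words, Lip_{β_2}(μ_α) ⊂ Lip_{β_1}(μ_α). -/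

import Mathlib

open MeasureTheory Real Set

noncomputable def besselI (ν z : ℝ) : ℝ :=
  ∑' m : ℕ, (z / 2) ^ (2 * (m : ℝ) + ν) / (Nat.factorial m * Real.Gamma ((m : ℝ) + ν + 1))

/-- The positive orthant `(0,∞)^d`. -/
def posOrthant (d : ℕ) : Set (Fin d → ℝ) := Set.univ.pi fun _ => Set.Ioi 0

/-- The Poisson–Laguerre kernel `p_t^α(x,y)`. -/
noncomputable def plKernel (d : ℕ) (α : Fin d → ℝ) (t : ℝ) (x y : Fin d → ℝ) : ℝ :=
  (1 / (2 * Real.sqrt π)) *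
    ∫ r in Set.Ioo (0 : ℝ) 1,
      (t * Real.exp (t ^ 2 / (4 * Real.log r)) /
          ((1 - r) ^ d * (-Real.log r) ^ ((3 : ℝ) / 2))) *
        (∏ j, (y j / x j) ^ (α j / 2) *
            Real.exp (-((r * x j + y j) / (1 - r)) - α j * Real.log r / 2) *
            besselI (α j) (2 * Real.sqrt (r * x j * y j) / (1 - r))) / r

/-- The Poisson–Laguerre semigroup `P_t^α f`, with the convention `P_0^α f = f`. -/
noncomputable def plP (d : ℕ) (α : Fin d → ℝ) (t : ℝ)
    (f : (Fin d → ℝ) → ℝ) (x : Fin d → ℝ) : ℝ :=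
  if t = 0 then f x else ∫ y in posOrthant d, plKernel d α t x y * f y

/-- The holomorphic extension to the sector `0 < Re z²` of the Gaussian average of `G`. -/
noncomputable def gaussianAverage (G : ℝ → ℝ) (z : ℂ) : ℂ :=
  (z / (√π : ℂ)) * ∫ v in Ioi (0 : ℝ), Complex.exp (-(z ^ 2 / 4) * (v : ℂ) ^ 2) * (G v : ℂ)

theorem integrable_cexp_neg_mul_sq_mul {G : ℝ → ℝ} {M : ℝ}
    (hG : AEStronglyMeasurable G (volume.restrict (Ioi 0)))
    (hM : ∀ᵐ v ∂volume.restrict (Ioi (0 : ℝ)), |G v| ≤ M) {w : ℂ} (hw : 0 < w.re) :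
    Integrable (fun v : ℝ => Complex.exp (-w * (v : ℂ) ^ 2) * (G v : ℂ))
      (volume.restrict (Ioi 0)) := by
  refine (integrable_cexp_neg_mul_sq hw).integrableOn.mul_bdd (c := M)
    (Complex.continuous_ofReal.comp_aestronglyMeasurable hG) ?_
  filter_upwards [hM] with v hv
  simpa using hv

theorem differentiableAt_integral_cexp_neg_mul_sq_mul {G : ℝ → ℝ} {M : ℝ}
    (hG : AEStronglyMeasurable G (volume.restrict (Ioi 0)))
    (hM : ∀ᵐ v ∂volume.restrict (Ioi (0 : ℝ)), |G v| ≤ M) {w : ℂ} (hw : 0 < w.re) :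
    DifferentiableAt ℂ
      (fun w : ℂ => ∫ v in Ioi (0 : ℝ), Complex.exp (-w * (v : ℂ) ^ 2) * (G v : ℂ)) w := by
  have hGc : AEStronglyMeasurable (fun v => (G v : ℂ)) (volume.restrict (Ioi 0)) :=
    Complex.continuous_ofReal.comp_aestronglyMeasurable hG
  have hs : {u : ℂ | w.re / 2 < u.re} ∈ nhds w :=
    (isOpen_lt continuous_const Complex.continuous_re).mem_nhds (by simp; linarith)
  refine (hasDerivAt_integral_of_dominated_loc_of_deriv_le
    (F' := fun u (v : ℝ) => Complex.exp (-u * (v : ℂ) ^ 2) * (-(v : ℂ) ^ 2) * (G v : ℂ))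
    (bound := fun v : ℝ => v ^ (2 : ℝ) * exp (-(w.re / 2) * v ^ 2) * M) hs ?_
    (integrable_cexp_neg_mul_sq_mul hG hM hw) ?_ ?_ ?_ ?_).2.differentiableAt
  · refine Filter.Eventually.of_forall fun u => AEStronglyMeasurable.mul ?_ hGc
    exact Continuous.aestronglyMeasurable (by fun_prop)
  · refine AEStronglyMeasurable.mul ?_ hGc
    exact Continuous.aestronglyMeasurable (by fun_prop)
  · filter_upwards [hM] with v hv u hu
    rw [norm_mul, norm_mul, norm_cexp_neg_mul_sq, norm_neg, norm_pow, Complex.norm_real,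
      Complex.norm_real, norm_eq_abs, norm_eq_abs, sq_abs, rpow_two,
      mul_comm (exp _)]
    have : exp (-u.re * v ^ 2) ≤ exp (-(w.re / 2) * v ^ 2) := by
      apply exp_le_exp.2
      have : w.re / 2 < u.re := hu
      nlinarith [sq_nonneg v]
    gcongr
  · exact (integrableOn_rpow_mul_exp_neg_mul_sq (by linarith) (by norm_num)).mul_const M
  · refine Filter.Eventually.of_forall fun v u _ => ?_
    have h : HasDerivAt (fun u : ℂ => -u * (v : ℂ) ^ 2) (-(v : ℂ) ^ 2) u := by
      simpa using (hasDerivAt_id u).neg.mul_const ((v : ℂ) ^ 2)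
    exact h.cexp.mul_const _

theorem norm_integral_cexp_neg_mul_sq_mul_le {G : ℝ → ℝ} {M : ℝ}
    (hM : ∀ᵐ v ∂volume.restrict (Ioi (0 : ℝ)), |G v| ≤ M) {w : ℂ} (hw : 0 < w.re) :
    ‖∫ v in Ioi (0 : ℝ), Complex.exp (-w * (v : ℂ) ^ 2) * (G v : ℂ)‖ ≤
      √(π / w.re) / 2 * M := by
  rw [← integral_gaussian_Ioi, ← integral_mul_const]
  refine norm_integral_le_of_norm_le
    ((integrable_exp_neg_mul_sq hw).integrableOn.mul_const M) ?_
  filter_upwards [hM] with v hv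
  rw [norm_mul, norm_cexp_neg_mul_sq, Complex.norm_real]
  gcongr
  exact hv

theorem re_sq_ge_of_mem_closedBall {t : ℝ} {z : ℂ}
    (hz : z ∈ Metric.closedBall (t : ℂ) (t / 2)) : t ^ 2 / 4 ≤ (z ^ 2).re := by
  have h : ‖z - t‖ ≤ t / 2 := by simpa [dist_eq_norm] using hz
  have h2 : ‖z - t‖ ^ 2 ≤ (t / 2) ^ 2 := by gcongr
  rw [Complex.sq_norm, Complex.normSq_apply] at h2
  simp only [Complex.sub_re, Complex.ofReal_re, Complex.sub_im, Complex.ofReal_im, sub_zero] at h2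
  rw [pow_two z, Complex.mul_re]
  nlinarith [sq_nonneg (2 * z.re - t)]

theorem differentiableAt_gaussianAverage {G : ℝ → ℝ} {M : ℝ}
    (hG : AEStronglyMeasurable G (volume.restrict (Ioi 0)))
    (hM : ∀ᵐ v ∂volume.restrict (Ioi (0 : ℝ)), |G v| ≤ M) {z : ℂ} (hz : 0 < (z ^ 2).re) :
    DifferentiableAt ℂ (gaussianAverage G) z := by
  have hw : 0 < (z ^ 2 / 4).re := by
    rw [show (4 : ℂ) = ((4 : ℝ) : ℂ) by norm_num, Complex.div_ofReal_re]
    positivity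
  have h2 : DifferentiableAt ℂ (fun z : ℂ => z ^ 2 / 4) z := by fun_prop
  have h1 : DifferentiableAt ℂ (fun z : ℂ => z / (√π : ℂ)) z := by fun_prop
  have h3 := DifferentiableAt.comp (f := fun z : ℂ => z ^ 2 / 4) z
    (differentiableAt_integral_cexp_neg_mul_sq_mul hG hM hw) h2
  exact h1.mul h3

theorem norm_gaussianAverage_le {G : ℝ → ℝ} {M : ℝ}
    (hM0 : 0 ≤ M) (hM : ∀ᵐ v ∂volume.restrict (Ioi (0 : ℝ)), |G v| ≤ M) {t : ℝ} (ht : 0 < t)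
    {z : ℂ} (hz : z ∈ Metric.closedBall (t : ℂ) (t / 2)) :
    ‖gaussianAverage G z‖ ≤ 3 * M := by
  have hre := re_sq_ge_of_mem_closedBall hz
  have hw' : (z ^ 2 / 4).re = (z ^ 2).re / 4 := by
    rw [show (4 : ℂ) = ((4 : ℝ) : ℂ) by norm_num, Complex.div_ofReal_re]
  have hw : (t / 4) ^ 2 ≤ (z ^ 2 / 4).re := by rw [hw']; nlinarith
  have hwpos : 0 < (z ^ 2 / 4).re := lt_of_lt_of_le (by positivity) hw
  have hzn : ‖z‖ ≤ 3 / 2 * t := by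
    have h : ‖z - t‖ ≤ t / 2 := by simpa [dist_eq_norm] using hz
    calc ‖z‖ = ‖(z - t) + t‖ := by ring_nf
      _ ≤ ‖z - t‖ + ‖(t : ℂ)‖ := norm_add_le _ _
      _ ≤ t / 2 + t := by
        rw [Complex.norm_real, norm_eq_abs, abs_of_pos ht]; linarith
      _ = _ := by ring
  have hI := norm_integral_cexp_neg_mul_sq_mul_le hM hwpos
  have hs : √(π / (z ^ 2 / 4).re) ≤ √π / (t / 4) := by
    calc √(π / (z ^ 2 / 4).re) ≤ √(π / (t / 4) ^ 2) := by gcongr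
      _ = √π / (t / 4) := by rw [sqrt_div pi_pos.le, sqrt_sq (by positivity)]
  have hpi : 0 < √π := sqrt_pos.2 pi_pos
  rw [gaussianAverage, norm_mul, norm_div, Complex.norm_real, norm_eq_abs, abs_of_pos hpi]
  calc ‖z‖ / √π * ‖∫ v in Ioi (0 : ℝ), Complex.exp (-(z ^ 2 / 4) * (v : ℂ) ^ 2) * (G v : ℂ)‖
      ≤ (3 / 2 * t) / √π * ((√π / (t / 4)) / 2 * M) := by
        gcongr
        exact hI.trans (by gcongr)
    _ = 3 * M := by field_simp; norm_num

theorem analyticAt_gaussianAverage {G : ℝ → ℝ} {M : ℝ}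
    (hG : AEStronglyMeasurable G (volume.restrict (Ioi 0)))
    (hM : ∀ᵐ v ∂volume.restrict (Ioi (0 : ℝ)), |G v| ≤ M) {t : ℝ} (ht : 0 < t) :
    AnalyticAt ℂ (gaussianAverage G) t := by
  have ho : IsOpen {z : ℂ | 0 < (z ^ 2).re} := isOpen_lt continuous_const (by fun_prop)
  have hd : DifferentiableOn ℂ (gaussianAverage G) {z : ℂ | 0 < (z ^ 2).re} := fun z hz =>
    (differentiableAt_gaussianAverage hG hM hz).differentiableWithinAt
  refine hd.analyticAt (ho.mem_nhds ?_)
  have : ((t : ℂ) ^ 2).re = t ^ 2 := by rw [← Complex.ofReal_pow, Complex.ofReal_re]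
  simp only [mem_ofPred_eq, this]
  positivity

theorem norm_iteratedDeriv_gaussianAverage_le {G : ℝ → ℝ} {M : ℝ} (hM0 : 0 ≤ M)
    (hG : AEStronglyMeasurable G (volume.restrict (Ioi 0)))
    (hM : ∀ᵐ v ∂volume.restrict (Ioi (0 : ℝ)), |G v| ≤ M) (k : ℕ) {t : ℝ} (ht : 0 < t) :
    ‖iteratedDeriv k (gaussianAverage G) t‖ ≤ k.factorial * (3 * M) / (t / 2) ^ k := by
  refine Complex.norm_iteratedDeriv_le_of_forall_mem_sphere_norm_le k (by positivity) ?_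
    fun z hz => norm_gaussianAverage_le hM0 hM ht (Metric.sphere_subset_closedBall hz)
  refine DifferentiableOn.diffContOnCl fun z hz => ?_
  rw [closure_ball _ (by positivity)] at hz
  refine (differentiableAt_gaussianAverage hG hM ?_).differentiableWithinAt
  exact lt_of_lt_of_le (by positivity) (re_sq_ge_of_mem_closedBall hz)

theorem iteratedDeriv_re_comp_ofReal {U : ℂ → ℂ} (hU : ∀ t : ℝ, 0 < t → AnalyticAt ℂ U t)
    (k : ℕ) : ∀ t : ℝ, 0 < t →
      iteratedDeriv k (fun t : ℝ => (U t).re) t = (iteratedDeriv k U t).re := by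
  induction k with
  | zero => intro t _; simp
  | succ k ih =>
    intro t ht
    rw [iteratedDeriv_succ, iteratedDeriv_succ]
    have hev : iteratedDeriv k (fun t : ℝ => (U t).re) =ᶠ[nhds t]
        fun s : ℝ => (iteratedDeriv k U s).re := by
      filter_upwards [Ioi_mem_nhds ht] with s hs using ih s hs
    rw [hev.deriv_eq]
    have hd : DifferentiableAt ℂ (iteratedDeriv k U) t := by
      rw [iteratedDeriv_eq_iterate]
      exact ((hU t ht).iterated_deriv k).differentiableAt
    exact hd.hasDerivAt.real_of_complex.deriv

theorem differentiableAt_iteratedDeriv_re_comp_ofReal {U : ℂ → ℂ}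
    (hU : ∀ t : ℝ, 0 < t → AnalyticAt ℂ U t) (k : ℕ) {t : ℝ} (ht : 0 < t) :
    DifferentiableAt ℝ (iteratedDeriv k (fun t : ℝ => (U t).re)) t := by
  have hev : iteratedDeriv k (fun t : ℝ => (U t).re) =ᶠ[nhds t]
      fun s : ℝ => (iteratedDeriv k U s).re := by
    filter_upwards [Ioi_mem_nhds ht] with s hs using iteratedDeriv_re_comp_ofReal hU k s hs
  have hd : DifferentiableAt ℂ (iteratedDeriv k U) t := by
    rw [iteratedDeriv_eq_iterate]
    exact ((hU t ht).iterated_deriv k).differentiableAt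
  exact hd.hasDerivAt.real_of_complex.differentiableAt.congr_of_eventuallyEq hev

theorem re_gaussianAverage_ofReal (G : ℝ → ℝ) (t : ℝ) :
    (gaussianAverage G t).re =
      t / √π * ∫ v in Ioi (0 : ℝ), exp (-(t ^ 2 / 4) * v ^ 2) * G v := by
  have : gaussianAverage G t =
      ((t / √π * ∫ v in Ioi (0 : ℝ), exp (-(t ^ 2 / 4) * v ^ 2) * G v : ℝ) : ℂ) := by
    rw [gaussianAverage]
    push_cast
    rw [← integral_complex_ofReal]
    push_cast
    rfl
  rw [this, Complex.ofReal_re]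

theorem abs_le_of_abs_deriv_le_rpow {g : ℝ → ℝ} (hg : ∀ t > 0, DifferentiableAt ℝ g t)
    (hlim : Filter.Tendsto g Filter.atTop (nhds 0)) {a B : ℝ} (ha : 0 < a)
    (hB : ∀ t > 0, |deriv g t| ≤ B * t ^ (-a - 1)) {t : ℝ} (ht : 0 < t) :
    |g t| ≤ B / a * t ^ (-a) := by
  have key : ∀ h : ℝ → ℝ, (∀ t > 0, DifferentiableAt ℝ h t) →
      Filter.Tendsto h Filter.atTop (nhds 0) → (∀ t > 0, deriv h t ≤ B * t ^ (-a - 1)) →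
      -(B / a * t ^ (-a)) ≤ h t := by
    intro h hh hl hd
    have hder : ∀ s > 0, HasDerivAt (fun s => h s + B / a * s ^ (-a))
        (deriv h s + B / a * (-a * s ^ (-a - 1))) s := fun s hs =>
      (hh s hs).hasDerivAt.add ((hasDerivAt_rpow_const (Or.inl hs.ne')).const_mul _)
    have hanti : AntitoneOn (fun s => h s + B / a * s ^ (-a)) (Ioi 0) := by
      refine antitoneOn_of_deriv_nonpos (convex_Ioi 0)
        (fun s hs => (hder s hs).continuousAt.continuousWithinAt)
        (fun s hs => ?_) fun s hs => ?_
      · rw [interior_Ioi] at hs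
        exact (hder s hs).differentiableAt.differentiableWithinAt
      · rw [interior_Ioi] at hs
        rw [(hder s hs).deriv]
        have h1 := hd s hs
        have h2 : B / a * (-a * s ^ (-a - 1)) = -(B * s ^ (-a - 1)) := by field_simp
        linarith
    have htend : Filter.Tendsto (fun s => h s + B / a * s ^ (-a)) Filter.atTop (nhds 0) := by
      simpa using hl.add ((tendsto_rpow_neg_atTop ha).const_mul (B / a))
    have := le_of_tendsto htend (b := h t + B / a * t ^ (-a)) (by
      filter_upwards [Filter.eventually_ge_atTop t] with s hs
      exact hanti ht (ht.trans_le hs) hs)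
    linarith
  rw [abs_le]
  refine ⟨key g hg hlim fun s hs => (abs_le.1 (hB s hs)).2, ?_⟩
  have := key (fun s => -g s) (fun s hs => (hg s hs).neg) (by simpa using hlim.neg)
    fun s hs => by
      rw [deriv.fun_neg]
      linarith [(abs_le.1 (hB s hs)).1]
  linarith

/-- The one-dimensional Laguerre heat kernel at time `-log r`, as a Poisson mixture of gamma
densities. -/
noncomputable def laguerreHeat (a ξ r y : ℝ) : ENNReal :=
  ∑' m : ℕ, ENNReal.ofReal (exp (-(r * ξ / (1 - r))) * ((r * ξ / (1 - r)) ^ m / m.factorial)) *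
    ProbabilityTheory.gammaPDF (m + a + 1) (1 / (1 - r)) y

theorem measurable_laguerreHeat (a ξ : ℝ) :
    Measurable fun p : ℝ × ℝ => laguerreHeat a ξ p.1 p.2 := by
  refine Measurable.tsum fun m => Measurable.fun_mul ?_ ?_
  · exact Measurable.ennreal_ofReal (by fun_prop)
  · refine Measurable.ennreal_ofReal ?_
    exact Measurable.ite (measurableSet_le measurable_const measurable_snd)
      (by fun_prop) measurable_const

theorem lintegral_laguerreHeat {a ξ r : ℝ} (ha : -1 < a) (hξ : 0 < ξ) (hr : r ∈ Ioo (0 : ℝ) 1) :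
    ∫⁻ y, laguerreHeat a ξ r y = 1 := by
  have hq : 0 < 1 - r := sub_pos.2 hr.2
  have hl : 0 ≤ r * ξ / (1 - r) := by have := hr.1; positivity
  have hmeas : ∀ m : ℕ, Measurable fun y : ℝ =>
      ProbabilityTheory.gammaPDF (m + a + 1) (1 / (1 - r)) y := fun m =>
    (ProbabilityTheory.measurable_gammaPDFReal _ _).ennreal_ofReal
  simp only [laguerreHeat]
  rw [lintegral_tsum fun m => ((hmeas m).const_mul _).aemeasurable]
  have hterm : ∀ m : ℕ, ∫⁻ y, ENNReal.ofReal
      (exp (-(r * ξ / (1 - r))) * ((r * ξ / (1 - r)) ^ m / m.factorial)) *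
        ProbabilityTheory.gammaPDF (m + a + 1) (1 / (1 - r)) y =
      ENNReal.ofReal (exp (-(r * ξ / (1 - r))) * ((r * ξ / (1 - r)) ^ m / m.factorial)) := by
    intro m
    have hm : (0 : ℝ) ≤ m := m.cast_nonneg
    rw [lintegral_const_mul _ (hmeas m),
      ProbabilityTheory.lintegral_gammaPDF_eq_one (by linarith) (by positivity), mul_one]
  simp_rw [hterm]
  have hsum : HasSum (fun m : ℕ =>
      exp (-(r * ξ / (1 - r))) * ((r * ξ / (1 - r)) ^ m / m.factorial)) 1 := by
    have := (NormedSpace.expSeries_div_hasSum_exp (r * ξ / (1 - r))).mul_left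
      (exp (-(r * ξ / (1 - r))))
    rwa [← Real.exp_eq_exp_ℝ, ← Real.exp_add, neg_add_cancel, Real.exp_zero] at this
  rw [← ENNReal.ofReal_tsum_of_nonneg (fun m => by positivity) hsum.summable, hsum.tsum_eq,
    ENNReal.ofReal_one]

theorem bessel_term_eq_poisson_mul_gamma {a ξ r y : ℝ} (hξ : 0 < ξ)
    (hr : r ∈ Ioo (0 : ℝ) 1) (hy : 0 < y) (m : ℕ) :
    (y / ξ) ^ (a / 2) * exp (-((r * ξ + y) / (1 - r)) - a * log r / 2) *
      ((2 * √(r * ξ * y) / (1 - r) / 2) ^ (2 * (m : ℝ) + a) /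
        (m.factorial * Gamma (m + a + 1))) / (1 - r) =
    exp (-(r * ξ / (1 - r))) * ((r * ξ / (1 - r)) ^ m / m.factorial) *
      ((1 / (1 - r)) ^ (m + a + 1) / Gamma (m + a + 1) * y ^ (m + a + 1 - 1) *
        exp (-(1 / (1 - r) * y))) := by
  have hr0 := hr.1
  have hq : 0 < 1 - r := sub_pos.2 hr.2
  set q := 1 - r with hqdef
  have e1 : (y / ξ) ^ (a / 2) = y ^ (a / 2) / ξ ^ (a / 2) := div_rpow hy.le hξ.le _
  have e2 : exp (-((r * ξ + y) / q) - a * log r / 2) =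
      exp (-(r * ξ / q)) * exp (-(1 / q * y)) / r ^ (a / 2) := by
    rw [rpow_def_of_pos hr0, ← Real.exp_add, ← Real.exp_sub]
    congr 1
    field_simp
    ring
  have e3 : (2 * √(r * ξ * y) / q / 2) ^ (2 * (m : ℝ) + a) =
      r ^ m * ξ ^ m * y ^ m * (r ^ (a / 2) * ξ ^ (a / 2) * y ^ (a / 2)) /
        (q ^ m * q ^ m * q ^ a) := by
    have h1 : 2 * √(r * ξ * y) / q / 2 = √(r * ξ * y) / q := by ring
    have h2 : √(r * ξ * y) ^ (2 * (m : ℝ) + a) = (r * ξ * y) ^ ((m : ℝ) + a / 2) := by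
      rw [sqrt_eq_rpow, ← rpow_mul (by positivity)]
      congr 1
      ring
    have h3 : q ^ (2 * (m : ℝ) + a) = q ^ m * q ^ m * q ^ a := by
      rw [rpow_add hq, two_mul, rpow_add hq, rpow_natCast]
    rw [h1, div_rpow (by positivity) hq.le, h2, h3, rpow_add (by positivity), rpow_natCast,
      mul_rpow (by positivity) hy.le, mul_rpow hr0.le hξ.le, mul_pow, mul_pow]
  have e4 : (1 / q) ^ ((m : ℝ) + a + 1) = 1 / (q ^ m * q ^ a * q) := by
    rw [one_div, inv_rpow hq.le, rpow_add hq, rpow_add hq, rpow_natCast, rpow_one, one_div]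
  have e5 : y ^ ((m : ℝ) + a + 1 - 1) = y ^ m * (y ^ (a / 2) * y ^ (a / 2)) := by
    rw [← rpow_add hy, add_halves, ← rpow_natCast, ← rpow_add hy]
    congr 1
    ring
  have p1 : 0 < r ^ (a / 2) := rpow_pos_of_pos hr0 _
  have p2 : 0 < ξ ^ (a / 2) := rpow_pos_of_pos hξ _
  have p3 : 0 < q ^ a := rpow_pos_of_pos hq _
  rw [e1, e2, e3, e4, e5, div_pow, mul_pow]
  clear_value q
  generalize Gamma ((m : ℝ) + a + 1) = Γ
  rcases eq_or_ne Γ 0 with rfl | hΓ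
  · simp
  · field_simp

theorem toReal_laguerreHeat {a ξ r y : ℝ} (ha : -1 < a) (hξ : 0 < ξ)
    (hr : r ∈ Ioo (0 : ℝ) 1) (hy : 0 < y) :
    (laguerreHeat a ξ r y).toReal =
      (y / ξ) ^ (a / 2) * exp (-((r * ξ + y) / (1 - r)) - a * log r / 2) *
        besselI a (2 * √(r * ξ * y) / (1 - r)) / (1 - r) := by
  have hr0 := hr.1
  have hq : 0 < 1 - r := sub_pos.2 hr.2
  rw [laguerreHeat, ENNReal.tsum_toReal_eq
    (fun m => ENNReal.mul_ne_top ENNReal.ofReal_ne_top (by exact ENNReal.ofReal_ne_top)), besselI,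
    ← tsum_mul_left, ← tsum_div_const]
  refine tsum_congr fun m => ?_
  have hm : (0 : ℝ) ≤ m := m.cast_nonneg
  have hΓ : 0 < Gamma (m + a + 1) := Gamma_pos_of_pos (by linarith)
  rw [bessel_term_eq_poisson_mul_gamma hξ hr hy m, ENNReal.toReal_mul,
    ENNReal.toReal_ofReal (by positivity), ProbabilityTheory.gammaPDF_of_nonneg hy.le,
    ENNReal.toReal_ofReal (by positivity)]

theorem integrable_toReal_laguerreHeat {a ξ r : ℝ} (ha : -1 < a) (hξ : 0 < ξ)
    (hr : r ∈ Ioo (0 : ℝ) 1) :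
    Integrable (fun y => (laguerreHeat a ξ r y).toReal) := by
  refine integrable_toReal_of_lintegral_ne_top ?_ (by simp [lintegral_laguerreHeat ha hξ hr])
  exact ((measurable_laguerreHeat a ξ).comp measurable_prodMk_left).aemeasurable

theorem integral_toReal_laguerreHeat {a ξ r : ℝ} (ha : -1 < a) (hξ : 0 < ξ)
    (hr : r ∈ Ioo (0 : ℝ) 1) :
    ∫ y, (laguerreHeat a ξ r y).toReal = 1 := by
  have hm : AEMeasurable (laguerreHeat a ξ r) :=
    ((measurable_laguerreHeat a ξ).comp measurable_prodMk_left).aemeasurable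
  rw [integral_toReal hm (ae_lt_top' hm (by simp [lintegral_laguerreHeat ha hξ hr])),
    lintegral_laguerreHeat ha hξ hr, ENNReal.toReal_one]

/-- The `d`-dimensional Laguerre heat kernel at time `-log r`. -/
noncomputable def laguerreHeatProd {d : ℕ} (α x : Fin d → ℝ) (r : ℝ) (y : Fin d → ℝ) : ℝ :=
  ∏ j, (laguerreHeat (α j) (x j) r (y j)).toReal

theorem measurable_laguerreHeatProd {d : ℕ} (α x : Fin d → ℝ) :
    Measurable fun p : ℝ × (Fin d → ℝ) => laguerreHeatProd α x p.1 p.2 := by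
  refine Finset.measurable_fun_prod _ fun j _ => Measurable.ennreal_toReal ?_
  have hj : Measurable fun p : ℝ × (Fin d → ℝ) => (p.1, p.2 j) := by fun_prop
  simpa only [Function.comp_def] using (measurable_laguerreHeat (α j) (x j)).comp hj

theorem laguerreHeatProd_nonneg {d : ℕ} (α x : Fin d → ℝ) (r : ℝ) (y : Fin d → ℝ) :
    0 ≤ laguerreHeatProd α x r y :=
  Finset.prod_nonneg fun _ _ => ENNReal.toReal_nonneg

theorem volume_restrict_posOrthant (d : ℕ) :
    (volume : Measure (Fin d → ℝ)).restrict (posOrthant d) =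
      Measure.pi fun _ => (volume : Measure ℝ).restrict (Ioi 0) := by
  rw [posOrthant, volume_pi, Measure.restrict_pi_pi]

theorem measurableSet_posOrthant (d : ℕ) : MeasurableSet (posOrthant d) :=
  MeasurableSet.univ_pi fun _ => measurableSet_Ioi

theorem integrableOn_laguerreHeatProd {d : ℕ} {α x : Fin d → ℝ} (hα : ∀ j, -1 < α j)
    (hx : x ∈ posOrthant d) {r : ℝ} (hr : r ∈ Ioo (0 : ℝ) 1) :
    IntegrableOn (laguerreHeatProd α x r) (posOrthant d) := by
  rw [IntegrableOn, volume_restrict_posOrthant]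
  exact Integrable.fintype_prod (f := fun j y => (laguerreHeat (α j) (x j) r y).toReal)
    fun j => (integrable_toReal_laguerreHeat (hα j) (hx j trivial) hr).integrableOn

theorem integral_laguerreHeatProd_le_one {d : ℕ} {α x : Fin d → ℝ} (hα : ∀ j, -1 < α j)
    (hx : x ∈ posOrthant d) {r : ℝ} (hr : r ∈ Ioo (0 : ℝ) 1) :
    ∫ y in posOrthant d, laguerreHeatProd α x r y ≤ 1 := by
  rw [volume_restrict_posOrthant]
  simp only [laguerreHeatProd]
  rw [integral_fintype_prod_eq_prod (fun j y => (laguerreHeat (α j) (x j) r y).toReal)]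
  refine Finset.prod_le_one (fun j _ => integral_nonneg fun _ => ENNReal.toReal_nonneg)
    fun j _ => ?_
  rw [← integral_toReal_laguerreHeat (hα j) (hx j trivial) hr]
  exact setIntegral_le_integral (integrable_toReal_laguerreHeat (hα j) (hx j trivial) hr)
    (Filter.Eventually.of_forall fun _ => ENNReal.toReal_nonneg)

/-- The density in the variable `r = exp (-s)` of the subordination measure, up to the
factor `1 / (2√π)`. -/
noncomputable def poissonDensity (t r : ℝ) : ℝ :=
  t * exp (t ^ 2 / (4 * log r)) / (-log r) ^ ((3 : ℝ) / 2) / r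

theorem image_exp_neg_inv_sq_Ioi :
    (fun v : ℝ => exp (-(v ^ 2)⁻¹)) '' Ioi 0 = Ioo 0 1 := by
  ext r
  constructor
  · rintro ⟨v, hv, rfl⟩
    have hv : (0 : ℝ) < v := hv
    refine ⟨exp_pos _, ?_⟩
    rw [exp_lt_one_iff, neg_lt_zero]
    positivity
  · rintro ⟨h0, h1⟩
    have hl : 0 < -log r := by linarith [log_neg h0 h1]
    refine ⟨√((-log r)⁻¹), sqrt_pos.2 (by positivity), ?_⟩
    simp only
    rw [sq_sqrt (by positivity), inv_inv, neg_neg, exp_log h0]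

theorem injOn_exp_neg_inv_sq : InjOn (fun v : ℝ => exp (-(v ^ 2)⁻¹)) (Ioi 0) := by
  intro v hv w hw h
  have hv : (0 : ℝ) < v := hv
  have hw : (0 : ℝ) < w := hw
  have h1 := exp_injective h
  rw [neg_inj, inv_inj] at h1
  exact (pow_left_inj₀ hv.le hw.le two_ne_zero).1 h1

theorem hasDerivWithinAt_exp_neg_inv_sq {v : ℝ} (hv : v ∈ Ioi (0 : ℝ)) :
    HasDerivWithinAt (fun v : ℝ => exp (-(v ^ 2)⁻¹)) (exp (-(v ^ 2)⁻¹) * (2 / v ^ 3))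
      (Ioi 0) v := by
  have hv : (0 : ℝ) < v := hv
  have h := (((hasDerivAt_pow 2 v).inv (by positivity)).neg.exp).hasDerivWithinAt (s := Ioi 0)
  refine h.congr_deriv ?_
  simp only [Pi.neg_apply, Pi.inv_apply]
  congr 1
  field_simp
  norm_num [mul_comm]

theorem abs_deriv_mul_poissonDensity (t : ℝ) {v : ℝ} (hv : v ∈ Ioi (0 : ℝ)) :
    |exp (-(v ^ 2)⁻¹) * (2 / v ^ 3)| * poissonDensity t (exp (-(v ^ 2)⁻¹)) =
      2 * t * exp (-(t ^ 2 / 4) * v ^ 2) := by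
  have hv : (0 : ℝ) < v := hv
  have h3 : ((v ^ 2)⁻¹) ^ ((3 : ℝ) / 2) = (v ^ 3)⁻¹ := by
    rw [inv_rpow (by positivity), ← rpow_natCast v 2, ← rpow_mul hv.le, ← rpow_natCast v 3]
    norm_num
  have h4 : t ^ 2 / (4 * -(v ^ 2)⁻¹) = -(t ^ 2 / 4) * v ^ 2 := by field_simp
  rw [abs_of_pos (by positivity), poissonDensity, log_exp, neg_neg, h3, h4]
  have := exp_pos (-(v ^ 2)⁻¹)
  field_simp

theorem integrableOn_poissonDensity {t : ℝ} (ht : 0 < t) :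
    IntegrableOn (poissonDensity t) (Ioo 0 1) := by
  rw [← image_exp_neg_inv_sq_Ioi, integrableOn_image_iff_integrableOn_abs_deriv_smul
    measurableSet_Ioi (fun v hv => hasDerivWithinAt_exp_neg_inv_sq hv) injOn_exp_neg_inv_sq]
  refine IntegrableOn.congr_fun ?_
    (fun v hv => (abs_deriv_mul_poissonDensity t hv).symm) measurableSet_Ioi
  exact ((integrable_exp_neg_mul_sq (by positivity)).const_mul _).integrableOn

theorem integral_poissonDensity_mul (t : ℝ) (H : ℝ → ℝ) :
    ∫ r in Ioo (0 : ℝ) 1, poissonDensity t r * H r =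
      2 * t * ∫ v in Ioi (0 : ℝ), exp (-(t ^ 2 / 4) * v ^ 2) * H (exp (-(v ^ 2)⁻¹)) := by
  rw [← image_exp_neg_inv_sq_Ioi, integral_image_eq_integral_abs_deriv_smul
    measurableSet_Ioi (fun v hv => hasDerivWithinAt_exp_neg_inv_sq hv) injOn_exp_neg_inv_sq,
    ← integral_const_mul]
  refine setIntegral_congr_fun measurableSet_Ioi fun v hv => ?_
  simp only [smul_eq_mul]
  rw [← mul_assoc, abs_deriv_mul_poissonDensity t hv, mul_assoc]

theorem plKernel_eq_integral_laguerreHeatProd {d : ℕ} {α x y : Fin d → ℝ}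
    (hα : ∀ j, -1 < α j) (hx : x ∈ posOrthant d) (hy : y ∈ posOrthant d) (t : ℝ) :
    plKernel d α t x y = (1 / (2 * √π)) *
      ∫ r in Ioo (0 : ℝ) 1, poissonDensity t r * laguerreHeatProd α x r y := by
  rw [plKernel]
  congr 1
  refine setIntegral_congr_fun measurableSet_Ioo fun r hr => ?_
  have hprod : laguerreHeatProd α x r y =
      (∏ j, (y j / x j) ^ (α j / 2) *
            exp (-((r * x j + y j) / (1 - r)) - α j * log r / 2) *
            besselI (α j) (2 * √(r * x j * y j) / (1 - r))) / (1 - r) ^ d := by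
    rw [laguerreHeatProd, Finset.prod_congr rfl fun j _ =>
      toReal_laguerreHeat (hα j) (hx j trivial) hr (hy j trivial), Finset.prod_div_distrib,
      Finset.prod_const, Finset.card_univ, Fintype.card_fin]
  simp only [hprod, poissonDensity]
  ring

theorem abs_integral_laguerreHeatProd_mul_le {d : ℕ} {α x : Fin d → ℝ} (hα : ∀ j, -1 < α j)
    (hx : x ∈ posOrthant d) {r : ℝ} (hr : r ∈ Ioo (0 : ℝ) 1) {f : (Fin d → ℝ) → ℝ} {M : ℝ}
    (hM : ∀ y, |f y| ≤ M) :
    |∫ y in posOrthant d, laguerreHeatProd α x r y * f y| ≤ M := by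
  have hM0 : 0 ≤ M := (abs_nonneg _).trans (hM 0)
  calc |∫ y in posOrthant d, laguerreHeatProd α x r y * f y|
      ≤ ∫ y in posOrthant d, laguerreHeatProd α x r y * M := by
        rw [← norm_eq_abs]
        refine norm_integral_le_of_norm_le ((integrableOn_laguerreHeatProd hα hx hr).mul_const M)
          (Filter.Eventually.of_forall fun y => ?_)
        rw [norm_mul, norm_of_nonneg (laguerreHeatProd_nonneg α x r y)]
        exact mul_le_mul_of_nonneg_left (hM y) (laguerreHeatProd_nonneg α x r y)
    _ ≤ 1 * M := by
        rw [integral_mul_const]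
        gcongr
        exact integral_laguerreHeatProd_le_one hα hx hr
    _ = M := one_mul M

theorem integrable_poissonDensity_mul_laguerreHeatProd_mul {d : ℕ} {α x : Fin d → ℝ}
    (hα : ∀ j, -1 < α j) (hx : x ∈ posOrthant d) {f : (Fin d → ℝ) → ℝ} (hf : Measurable f)
    {M : ℝ} (hM : ∀ y, |f y| ≤ M) {t : ℝ} (ht : 0 < t) :
    Integrable
      (Function.uncurry fun (y : Fin d → ℝ) (r : ℝ) =>
        poissonDensity t r * laguerreHeatProd α x r y * f y)
      ((volume.restrict (posOrthant d)).prod (volume.restrict (Ioo (0 : ℝ) 1))) := by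
  have hφ : Measurable (poissonDensity t) := by
    unfold poissonDensity
    fun_prop
  have hh : Measurable fun p : (Fin d → ℝ) × ℝ => laguerreHeatProd α x p.2 p.1 := by
    simpa only [Function.comp_def, Prod.fst_swap, Prod.snd_swap] using
      (measurable_laguerreHeatProd α x).comp measurable_swap
  have hK : Measurable fun p : (Fin d → ℝ) × ℝ =>
      poissonDensity t p.2 * laguerreHeatProd α x p.2 p.1 :=
    (hφ.comp measurable_snd).mul hh
  have hf' : Measurable fun p : (Fin d → ℝ) × ℝ => f p.1 := hf.comp measurable_fst
  suffices h : Integrable (fun p : (Fin d → ℝ) × ℝ =>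
      poissonDensity t p.2 * laguerreHeatProd α x p.2 p.1)
      ((volume.restrict (posOrthant d)).prod (volume.restrict (Ioo (0 : ℝ) 1))) from
    h.mul_bdd hf'.aestronglyMeasurable (Filter.Eventually.of_forall fun p => hM p.1)
  rw [integrable_prod_iff' hK.aestronglyMeasurable]
  constructor
  · filter_upwards [ae_restrict_mem measurableSet_Ioo] with r hr
    exact (integrableOn_laguerreHeatProd hα hx hr).const_mul _
  · refine Integrable.mono' (integrableOn_poissonDensity ht).norm
      (hK.norm.stronglyMeasurable.integral_prod_left).aestronglyMeasurable ?_
    filter_upwards [ae_restrict_mem measurableSet_Ioo] with r hr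
    rw [norm_of_nonneg (integral_nonneg fun _ => norm_nonneg _)]
    simp only [norm_mul, norm_of_nonneg (laguerreHeatProd_nonneg _ _ _ _)]
    rw [integral_const_mul]
    exact mul_le_of_le_one_right (norm_nonneg _) (integral_laguerreHeatProd_le_one hα hx hr)

theorem exists_plP_eq_re_gaussianAverage {d : ℕ} {α x : Fin d → ℝ}
    (hα : ∀ j, -1 < α j) (hx : x ∈ posOrthant d) {f : (Fin d → ℝ) → ℝ} (hf : Measurable f)
    {M : ℝ} (hM : ∀ y, |f y| ≤ M) :
    ∃ G : ℝ → ℝ, AEStronglyMeasurable G (volume.restrict (Ioi 0)) ∧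
      (∀ᵐ v ∂volume.restrict (Ioi (0 : ℝ)), |G v| ≤ M) ∧
      ∀ t > 0, plP d α t f x = (gaussianAverage G t).re := by
  set H : ℝ → ℝ := fun r => ∫ y in posOrthant d, laguerreHeatProd α x r y * f y with hH
  have hHm : Measurable H := by
    have : Measurable fun p : ℝ × (Fin d → ℝ) => laguerreHeatProd α x p.1 p.2 * f p.2 :=
      (measurable_laguerreHeatProd α x).mul (hf.comp measurable_snd)
    exact (this.stronglyMeasurable.integral_prod_right).measurable
  refine ⟨fun v => H (exp (-(v ^ 2)⁻¹)), ?_, ?_, fun t ht => ?_⟩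
  · exact (hHm.comp (by fun_prop)).aestronglyMeasurable
  · filter_upwards [ae_restrict_mem measurableSet_Ioi] with v hv
    have hr : exp (-(v ^ 2)⁻¹) ∈ Ioo (0 : ℝ) 1 := by
      rw [← image_exp_neg_inv_sq_Ioi]
      exact mem_image_of_mem _ hv
    exact abs_integral_laguerreHeatProd_mul_le hα hx hr hM
  · have hswap : ∫ y in posOrthant d, plKernel d α t x y * f y =
        1 / (2 * √π) * ∫ r in Ioo (0 : ℝ) 1, poissonDensity t r * H r := by
      calc ∫ y in posOrthant d, plKernel d α t x y * f y
          = ∫ y in posOrthant d, 1 / (2 * √π) * ∫ r in Ioo (0 : ℝ) 1,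
              poissonDensity t r * laguerreHeatProd α x r y * f y := by
            refine setIntegral_congr_fun (measurableSet_posOrthant d) fun y hy => ?_
            rw [plKernel_eq_integral_laguerreHeatProd hα hx hy, integral_mul_const, mul_assoc]
        _ = 1 / (2 * √π) * ∫ r in Ioo (0 : ℝ) 1, ∫ y in posOrthant d,
              poissonDensity t r * laguerreHeatProd α x r y * f y := by
            rw [integral_const_mul, integral_integral_swap
              (integrable_poissonDensity_mul_laguerreHeatProd_mul hα hx hf hM ht)]
        _ = _ := by
            simp only [hH, mul_assoc, integral_const_mul]
    rw [plP, if_neg ht.ne', hswap, integral_poissonDensity_mul, re_gaussianAverage_ofReal]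
    have hpi : 0 < √π := sqrt_pos.2 pi_pos
    field_simp

theorem abs_iteratedDeriv_le_rpow_of_le {u : ℝ → ℝ} {β B : ℝ} {k : ℕ} (hk : β < k) (n : ℕ)
    (hd : ∀ j, ∀ t > 0, DifferentiableAt ℝ (iteratedDeriv j u) t)
    (hlim : ∀ j ≥ k, Filter.Tendsto (iteratedDeriv j u) Filter.atTop (nhds 0))
    (hB : ∀ t > 0, |iteratedDeriv (k + n) u t| ≤ B * t ^ (β - (k + n : ℕ))) {t : ℝ}
    (ht : 0 < t) :
    |iteratedDeriv k u t| ≤ B / (∏ i ∈ Finset.range n, ((k : ℝ) + i - β)) * t ^ (β - k) := by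
  induction n generalizing B with
  | zero => simpa using hB t ht
  | succ n ih =>
    have ha : 0 < (k : ℝ) + n - β := by
      have : (0 : ℝ) ≤ n := n.cast_nonneg
      linarith
    have h := ih (B := B / ((k : ℝ) + n - β)) fun s hs => by
      have h1 := abs_le_of_abs_deriv_le_rpow (hd (k + n)) (hlim (k + n) (by omega)) ha (B := B)
        (fun r hr => by
          have h2 := hB r hr
          rw [← add_assoc, iteratedDeriv_succ] at h2
          convert! h2 using 3
          push_cast
          ring) hs
      convert! h1 using 3
      push_cast
      ring
    rw [Finset.prod_range_succ, mul_comm, ← div_div]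
    rw [div_right_comm, mul_comm] at h
    exact h

theorem laguerre_lipschitz_monotone
    (d : ℕ) (hd : 1 ≤ d) (α : Fin d → ℝ) (hα : ∀ j, -(1 / 2 : ℝ) < α j)
    (β₁ β₂ : ℝ) (hβ₁ : 0 < β₁) (hβ₁₂ : β₁ < β₂)
    (f : (Fin d → ℝ) → ℝ) (hf : Measurable f) (M : ℝ) (hM : ∀ y, |f y| ≤ M)
    (A : ℝ)
    (hA : ∀ t > (0 : ℝ), ∀ x ∈ posOrthant d,
      |iteratedDeriv (⌊β₂⌋₊ + 1) (fun u => plP d α u f x) t| ≤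
        A * t ^ (β₂ - ((⌊β₂⌋₊ : ℝ) + 1))) :
    ∃ A' ≥ (0 : ℝ), ∀ t > (0 : ℝ), ∀ x ∈ posOrthant d,
      |iteratedDeriv (⌊β₁⌋₊ + 1) (fun u => plP d α u f x) t| ≤
        A' * t ^ (β₁ - ((⌊β₁⌋₊ : ℝ) + 1)) := by
  have hM0 : 0 ≤ M := (abs_nonneg _).trans (hM 0)
  have hα' : ∀ j, -1 < α j := fun j => by linarith [hα j]
  obtain ⟨n, hn⟩ := Nat.exists_eq_add_of_le (Nat.add_le_add_right (Nat.floor_le_floor hβ₁₂.le) 1)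
  set k := ⌊β₁⌋₊ + 1 with hk
  have hβk : β₁ < k := by rw [hk]; exact_mod_cast Nat.lt_floor_add_one β₁
  set C : ℝ := (k + n).factorial * (3 * M) * 2 ^ (k + n) with hC
  have hC0 : 0 ≤ C := by positivity
  set B : ℝ := max A C with hBdef
  have hB0 : 0 ≤ B := hC0.trans (le_max_right _ _)
  have hprod : 0 < ∏ i ∈ Finset.range n, ((k : ℝ) + i - β₁) :=
    Finset.prod_pos fun i _ => by
      have : (0 : ℝ) ≤ i := i.cast_nonneg
      linarith
  refine ⟨B / ∏ i ∈ Finset.range n, ((k : ℝ) + i - β₁), by positivity, fun t ht x hx => ?_⟩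
  obtain ⟨G, hG, hGM, hP⟩ := exists_plP_eq_re_gaussianAverage hα' hx hf hM
  have hU : ∀ s : ℝ, 0 < s → AnalyticAt ℂ (gaussianAverage G) s := fun s hs =>
    analyticAt_gaussianAverage hG hGM hs
  have heq : ∀ j, ∀ s > 0, iteratedDeriv j (fun u => plP d α u f x) s =
      iteratedDeriv j (fun u : ℝ => (gaussianAverage G u).re) s := fun j s hs =>
    Set.EqOn.iteratedDeriv_of_isOpen (fun u hu => hP u hu) isOpen_Ioi j hs
  have hbound : ∀ j, ∀ s > 0, |iteratedDeriv j (fun u : ℝ => (gaussianAverage G u).re) s| ≤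
      j.factorial * (3 * M) / (s / 2) ^ j := fun j s hs => by
    rw [iteratedDeriv_re_comp_ofReal hU j s hs]
    exact (Complex.abs_re_le_norm _).trans
      (norm_iteratedDeriv_gaussianAverage_le hM0 hG hGM j hs)
  rw [heq _ t ht]
  have hgoal := abs_iteratedDeriv_le_rpow_of_le (u := fun u : ℝ => (gaussianAverage G u).re)
    (B := B) hβk n
    (fun j s hs => differentiableAt_iteratedDeriv_re_comp_ofReal hU j hs) ?_ ?_ ht
  · convert! hgoal using 3
    rw [hk]
    push_cast
    ring
  · intro j hj
    have hlim : Filter.Tendsto (fun s : ℝ => j.factorial * (3 * M) / (s / 2) ^ j)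
        Filter.atTop (nhds 0) :=
      ((Filter.tendsto_pow_atTop (by omega)).comp
        (Filter.tendsto_id.atTop_div_const two_pos)).const_div_atTop _
    refine squeeze_zero_norm' ?_ hlim
    filter_upwards [Filter.eventually_gt_atTop 0] with s hs using hbound j s hs
  · intro s hs
    rcases le_total s 1 with h1 | h1
    · rw [← heq _ s hs, ← hn]
      refine (hA s hs x hx).trans ?_
      push_cast
      refine mul_le_mul (le_max_left _ _) ?_ (by positivity) hB0
      exact rpow_le_rpow_of_exponent_ge hs h1 (by linarith)
    · refine (hbound _ s hs).trans ?_
      calc ((k + n).factorial : ℝ) * (3 * M) / (s / 2) ^ (k + n)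
          = C * s ^ (-((k + n : ℕ) : ℝ)) := by
            rw [rpow_neg hs.le, rpow_natCast, hC, div_pow]
            field_simp
        _ ≤ B * s ^ (β₁ - (k + n : ℕ)) := by
            refine mul_le_mul (le_max_right _ _) ?_ (by positivity) hB0
            exact rpow_le_rpow_of_exponent_le h1 (by linarith)
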